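/- Let $(x_n)_{n \geq 1}$ be a sequence in $[0,1)$ with asymptotic distribution given by an absolutely continuous measure with bounded density $g$ on $[0,1]$, and suppose the pair correlation limit $F(s)$ exists in $[0,\infty)$ for every $s > 0$. Then $\limsup_{s \to \infty} \frac{F(s)}{2s} \geq \int_0^1 g(x)^2\,dx$. -/

import Mathlib

open Finset Filter MeasureTheory

/-- Distance to the nearest integer. -/
noncomputable def distToInt (t : ℝ) : ℝ := |t - round t|

/-!
Compare the empirical distribution function of `x 1, …, x N` at two scales, `S / j` with `j` fixed
and `S / N` with `N = j * k`. The coarse difference quotient is the average of `k` translates of the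
fine one, so by Cauchy–Schwarz its `L²` norm is no larger. The squared `L²` norm of the fine one is
`S⁻²` times the sum of the overlaps `(S / N - |x m - x n|)⁺`, which are controlled by the pair
counts at the scales `r / N`, `1 ≤ r ≤ S`. As `k → ∞` and then `j → ∞` the coarse quotient tends to
the density almost everywhere, and two applications of Fatou's lemma give
`S² ∫ g² ≤ S + ∑ r ≤ S, F r`. If `F r ≤ 2 * L * r` for large `r`, dividing by `S²` and letting
`S → ∞` yields `∫ g² ≤ L`.

The real `limsup` takes a junk value if `F s / (2 * s)` is unbounded; boundedness follows by sorting
the points into `N` arcs of the circle and applying the rearrangement inequality to their sizes.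
-/

open scoped Topology ENNReal

section WindowCount

variable {ι : Type*} (T : Finset ι) (x : ι → ℝ)

/-- The number of points `x n`, `n ∈ T`, in the window `(t, t + h]`. -/
noncomputable def windowCount (h t : ℝ) : ℕ := #{n ∈ T | x n ∈ Set.Ioc t (t + h)}

lemma windowCount_eq_sum_indicator (h t : ℝ) :
    (windowCount T x h t : ℝ≥0∞) = ∑ n ∈ T, (Set.Ico (x n - h) (x n)).indicator 1 t := by
  have mem_iff (n : ι) : x n ∈ Set.Ioc t (t + h) ↔ t ∈ Set.Ico (x n - h) (x n) := by
    rw [Set.mem_Ioc, Set.mem_Ico, sub_le_iff_le_add, and_comm]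
  simp_rw [windowCount, mem_iff, Set.indicator_apply, Pi.one_apply, sum_boole]

lemma measurable_windowCount (h : ℝ) :
    Measurable fun t => (windowCount T x h t : ℝ≥0∞) := by
  simp_rw [windowCount_eq_sum_indicator]
  exact T.measurable_fun_sum fun n _ => measurable_one.indicator measurableSet_Ico

lemma card_filter_le_eq_add_windowCount {h : ℝ} (hh : 0 ≤ h) (t : ℝ) :
    #{n ∈ T | x n ≤ t + h} = #{n ∈ T | x n ≤ t} + windowCount T x h t := by
  classical
  rw [windowCount, ← card_union_of_disjoint, ← filter_or]
  · congr! 2 with n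
    grind
  · exact disjoint_filter.2 fun n _ hn hn' => hn.not_gt hn'.1

lemma windowCount_add {h₁ h₂ : ℝ} (h₁_nonneg : 0 ≤ h₁) (h₂_nonneg : 0 ≤ h₂) (t : ℝ) :
    windowCount T x (h₁ + h₂) t = windowCount T x h₁ t + windowCount T x h₂ (t + h₁) := by
  have total := card_filter_le_eq_add_windowCount T x (add_nonneg h₁_nonneg h₂_nonneg) t
  have first := card_filter_le_eq_add_windowCount T x h₁_nonneg t
  have second := card_filter_le_eq_add_windowCount T x h₂_nonneg (t + h₁)
  rw [add_assoc] at second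
  lia

lemma windowCount_natCast_mul {h : ℝ} (hh : 0 ≤ h) (k : ℕ) (t : ℝ) :
    windowCount T x (k * h) t = ∑ i ∈ range k, windowCount T x h (t + i * h) := by
  induction k with
  | zero => simp [windowCount]
  | succ k ih =>
    rw [sum_range_succ, ← ih, ← windowCount_add T x (by positivity) hh]
    push_cast
    ring_nf

lemma lintegral_windowCount_natCast_mul_sq_le {h : ℝ} (hh : 0 ≤ h) (k : ℕ) :
    ∫⁻ t, (windowCount T x (k * h) t : ℝ≥0∞) ^ 2 ≤
      k ^ 2 * ∫⁻ t, (windowCount T x h t : ℝ≥0∞) ^ 2 := by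
  have sq_le (t : ℝ) : (windowCount T x (k * h) t : ℝ≥0∞) ^ 2 ≤
      k * ∑ i ∈ range k, (windowCount T x h (t + i * h) : ℝ≥0∞) ^ 2 := by
    rw [windowCount_natCast_mul T x hh]
    exact_mod_cast card_range k ▸ sq_sum_le_card_mul_sum_sq
  have measurable_sq := (measurable_windowCount T x h).pow_const 2
  have measurable_shift (i : ℕ) :
      Measurable fun t => (windowCount T x h (t + i * h) : ℝ≥0∞) ^ 2 :=
    measurable_sq.comp (measurable_add_const (i * h))
  calc ∫⁻ t, (windowCount T x (k * h) t : ℝ≥0∞) ^ 2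
      ≤ ∫⁻ t, k * ∑ i ∈ range k, (windowCount T x h (t + i * h) : ℝ≥0∞) ^ 2 :=
        lintegral_mono sq_le
    _ = k * ∑ i ∈ range k, ∫⁻ t, (windowCount T x h (t + i * h) : ℝ≥0∞) ^ 2 := by
        rw [lintegral_const_mul _ (by fun_prop),
          lintegral_finsetSum _ fun i _ => measurable_shift i]
    _ = k * ∑ _i ∈ range k, ∫⁻ t, (windowCount T x h t : ℝ≥0∞) ^ 2 := by
        simp_rw [lintegral_add_right_eq_self fun t => (windowCount T x h t : ℝ≥0∞) ^ 2]
    _ = k ^ 2 * ∫⁻ t, (windowCount T x h t : ℝ≥0∞) ^ 2 := by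
        rw [sum_const, card_range, nsmul_eq_mul, sq, mul_assoc]

lemma volume_Ico_inter_Ico (a b h : ℝ) :
    volume (Set.Ico (a - h) a ∩ Set.Ico (b - h) b) = ENNReal.ofReal (h - |a - b|) := by
  rw [Set.Ico_inter_Ico, Real.volume_Ico]
  congr 1
  grind

lemma lintegral_windowCount_sq (h : ℝ) :
    ∫⁻ t, (windowCount T x h t : ℝ≥0∞) ^ 2 =
      ∑ p ∈ T ×ˢ T, ENNReal.ofReal (h - |x p.1 - x p.2|) := by
  have measurableSet_inter (p : ι × ι) :
      MeasurableSet (Set.Ico (x p.1 - h) (x p.1) ∩ Set.Ico (x p.2 - h) (x p.2)) :=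
    measurableSet_Ico.inter measurableSet_Ico
  have sq_eq (t : ℝ) : (windowCount T x h t : ℝ≥0∞) ^ 2 = ∑ p ∈ T ×ˢ T,
      (Set.Ico (x p.1 - h) (x p.1) ∩ Set.Ico (x p.2 - h) (x p.2)).indicator 1 t := by
    simp_rw [Set.inter_indicator_one, Pi.mul_apply]
    rw [windowCount_eq_sum_indicator, sq, sum_mul_sum, sum_product]
  simp_rw [sq_eq]
  rw [lintegral_finsetSum _ fun p _ => measurable_one.indicator (measurableSet_inter p)]
  simp_rw [lintegral_indicator_one (measurableSet_inter _), volume_Ico_inter_Ico]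

end WindowCount

section ClosePairs

variable (x : ℕ → ℝ) (N : ℕ)

/-- The pairs counted by the pair correlation function: ordered pairs of distinct indices in
`[1, N]` whose points are within `s / N` of each other modulo `1`. -/
noncomputable def closePairs (s : ℝ) : Finset (ℕ × ℕ) :=
  {p ∈ Icc 1 N ×ˢ Icc 1 N | p.1 ≠ p.2 ∧ distToInt (x p.1 - x p.2) ≤ s / N}

/-- `F` is the limiting pair correlation function of the sequence `x`; only its values on `(0, ∞)`
are constrained. -/
def HasPairCorrelation (F : ℝ → ℝ) : Prop :=
  ∀ s : ℝ, 0 < s → Tendsto (fun N : ℕ => (#(closePairs x N s) : ℝ) / N) atTop (𝓝 (F s))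

lemma distToInt_nonneg (t : ℝ) : 0 ≤ distToInt t := abs_nonneg _

lemma distToInt_le_abs_sub_intCast (t : ℝ) (q : ℤ) : distToInt t ≤ |t - q| := round_le t q

lemma distToInt_le_abs (t : ℝ) : distToInt t ≤ |t| := by
  simpa using distToInt_le_abs_sub_intCast t 0

lemma card_filter_distToInt_le (s : ℝ) :
    #{p ∈ Icc 1 N ×ˢ Icc 1 N | distToInt (x p.1 - x p.2) ≤ s / N} ≤
      N + #(closePairs x N s) := by
  calc #{p ∈ Icc 1 N ×ˢ Icc 1 N | distToInt (x p.1 - x p.2) ≤ s / N}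
      ≤ #((Icc 1 N).diag ∪ closePairs x N s) := card_le_card fun p hp => by
        grind [closePairs]
    _ ≤ #(Icc 1 N).diag + #(closePairs x N s) := card_union_le _ _
    _ = N + #(closePairs x N s) := by rw [diag_card, Nat.card_Icc, Nat.add_sub_cancel]

lemma natCast_sub_le_card_filter_Icc (S : ℕ) {y : ℝ} (hy : 0 ≤ y) :
    S - y ≤ #{r ∈ Icc 1 S | y ≤ (r : ℕ)} := by
  have Ioc_subset : Ioc ⌊y⌋₊ S ⊆ {r ∈ Icc 1 S | y ≤ (r : ℕ)} := fun r hr => by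
    rw [mem_Ioc] at hr
    exact mem_filter.2 ⟨mem_Icc.2 ⟨by lia, hr.2⟩, (Nat.lt_of_floor_lt hr.1).le⟩
  have S_le : S ≤ #{r ∈ Icc 1 S | y ≤ (r : ℕ)} + ⌊y⌋₊ :=
    tsub_le_iff_right.1 ((Nat.card_Ioc _ _).symm.trans_le (card_le_card Ioc_subset))
  have S_le_cast : (S : ℝ) ≤ #{r ∈ Icc 1 S | y ≤ (r : ℕ)} + (⌊y⌋₊ : ℝ) := by exact_mod_cast S_le
  linarith [Nat.floor_le hy]

variable {N}

lemma lintegral_windowCount_sq_le (hN : 0 < N) (S : ℕ) :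
    ∫⁻ t, (windowCount (Icc 1 N) x (S / N) t : ℝ≥0∞) ^ 2 ≤
      ENNReal.ofReal (S + ∑ r ∈ Icc 1 S, (#(closePairs x N r) : ℝ) / N) := by
  have N_pos : (0 : ℝ) < N := by exact_mod_cast hN
  have overlap_le (d : ℝ) : S / N - |d| ≤ (#{r ∈ Icc 1 S | distToInt d ≤ (r : ℕ) / N} : ℝ) / N := by
    have count := natCast_sub_le_card_filter_Icc S (mul_nonneg N_pos.le (distToInt_nonneg d))
    simp_rw [← le_div_iff₀' N_pos] at count
    grw [← count, distToInt_le_abs d]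
    exact (by field_simp : _ = _).le
  rw [lintegral_windowCount_sq]
  grw [sum_le_sum fun p _ => ENNReal.ofReal_le_ofReal (overlap_le (x p.1 - x p.2)),
    ← ENNReal.ofReal_sum_of_nonneg fun p _ => by positivity]
  gcongr
  calc ∑ p ∈ Icc 1 N ×ˢ Icc 1 N,
        (#{r ∈ Icc 1 S | distToInt (x p.1 - x p.2) ≤ (r : ℕ) / N} : ℝ) / N
      = (∑ r ∈ Icc 1 S,
          (#{p ∈ Icc 1 N ×ˢ Icc 1 N | distToInt (x p.1 - x p.2) ≤ (r : ℕ) / N} : ℝ)) / N := by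
        rw [← sum_div]
        exact_mod_cast congrArg (fun c : ℕ => (c : ℝ) / N)
          (sum_card_bipartiteAbove_eq_sum_card_bipartiteBelow _)
    _ ≤ (∑ r ∈ Icc 1 S, (N + #(closePairs x N r) : ℝ)) / N := by
        gcongr with r
        exact_mod_cast card_filter_distToInt_le x N r
    _ = S + ∑ r ∈ Icc 1 S, (#(closePairs x N r) : ℝ) / N := by
        rw [sum_add_distrib, sum_const, Nat.card_Icc, Nat.add_sub_cancel, nsmul_eq_mul, add_div,
          mul_div_cancel_right₀ _ N_pos.ne', sum_div]

end ClosePairs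

section LinearGrowth

lemma card_filter_eq_perm_le {ι A : Type*} [Finite A] [DecidableEq A] (T : Finset ι)
    (colour : ι → A) (σ : Equiv.Perm A) :
    #{p ∈ T ×ˢ T | colour p.1 = σ (colour p.2)} ≤ #{p ∈ T ×ˢ T | colour p.1 = colour p.2} := by
  have := Fintype.ofFinite A
  let size (a : A) : ℕ := #{n ∈ T | colour n = a}
  have card_eq_sum (τ : Equiv.Perm A) :
      #{p ∈ T ×ˢ T | colour p.1 = τ (colour p.2)} = ∑ a, size (τ a) * size a := by
    rw [card_eq_sum_card_fiberwise (f := fun p => colour p.2) (t := univ) (by simp)]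
    refine sum_congr rfl fun a _ => ?_
    rw [← card_product]
    congr 1
    grind
  calc #{p ∈ T ×ˢ T | colour p.1 = σ (colour p.2)} = ∑ a, size (σ a) * size a := card_eq_sum σ
    _ ≤ ∑ a, size a * size a := (monovary_self size).sum_comp_perm_mul_le_sum_mul
    _ = #{p ∈ T ×ˢ T | colour p.1 = colour p.2} := (card_eq_sum (Equiv.refl A)).symm

/-- The label modulo `N` of the arc `[k / N, (k + 1) / N)` of the circle `ℝ / ℤ` containing `u`. -/
noncomputable def circleBox (N : ℕ) (u : ℝ) : ZMod N := (⌊N * u⌋ : ℤ)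

variable {N : ℕ}

lemma distToInt_sub_le_of_circleBox_eq (hN : 0 < N) {u v : ℝ}
    (h : circleBox N u = circleBox N v) : distToInt (u - v) ≤ 1 / N := by
  have N_pos : (0 : ℝ) < N := by exact_mod_cast hN
  obtain ⟨q, hq⟩ := (ZMod.intCast_eq_intCast_iff_dvd_sub _ _ _).1 h.symm
  have floor_sub_floor : (⌊N * u⌋ : ℝ) - ⌊N * v⌋ = N * q := by exact_mod_cast hq
  refine (distToInt_le_abs_sub_intCast _ q).trans ?_
  rw [le_div_iff₀ N_pos, ← abs_of_pos N_pos, ← abs_mul, abs_le]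
  constructor <;>
    linarith [Int.floor_le (N * u), Int.lt_floor_add_one (N * u), Int.floor_le (N * v),
      Int.lt_floor_add_one (N * v)]

lemma exists_circleBox_eq_add (hN : 0 < N) {u v s : ℝ} (h : distToInt (u - v) ≤ s / N) :
    ∃ k ∈ Icc (-(⌈s⌉₊ + 1) : ℤ) (⌈s⌉₊ + 1), circleBox N u = circleBox N v + k := by
  have N_pos : (0 : ℝ) < N := by exact_mod_cast hN
  set q := round (u - v)
  have scaled : |N * u - N * v - N * q| ≤ s := by
    rw [← mul_sub, ← mul_sub, abs_mul, abs_of_pos N_pos]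
    exact (le_div_iff₀' N_pos).1 h
  have floor_diff_cast : |((⌊N * u⌋ - ⌊N * v⌋ - N * q : ℤ) : ℝ)| < ((⌈s⌉₊ + 2 : ℤ) : ℝ) := by
    rw [abs_le] at scaled
    rw [abs_lt]
    push_cast
    constructor <;>
      linarith [Int.floor_le (N * u), Int.lt_floor_add_one (N * u), Int.floor_le (N * v),
        Int.lt_floor_add_one (N * v), Nat.le_ceil s]
  have floor_diff : |⌊N * u⌋ - ⌊N * v⌋ - N * q| < (⌈s⌉₊ + 2 : ℤ) := by
    exact_mod_cast floor_diff_cast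
  refine ⟨⌊N * u⌋ - ⌊N * v⌋ - N * q, ?_, by simp [circleBox]⟩
  rw [abs_lt] at floor_diff
  rw [mem_Icc]
  lia

lemma card_closePairs_le (x : ℕ → ℝ) (hN : 0 < N) (s : ℝ) :
    #(closePairs x N s) ≤ (2 * ⌈s⌉₊ + 3) * (N + #(closePairs x N 1)) := by
  have : NeZero N := ⟨hN.ne'⟩
  let shifted (k : ℤ) : Finset (ℕ × ℕ) :=
    {p ∈ Icc 1 N ×ˢ Icc 1 N | circleBox N (x p.1) = circleBox N (x p.2) + k}
  have card_shifted_le (k : ℤ) : #(shifted k) ≤ N + #(closePairs x N 1) :=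
    calc #(shifted k)
        ≤ #{p ∈ Icc 1 N ×ˢ Icc 1 N | circleBox N (x p.1) = circleBox N (x p.2)} :=
          card_filter_eq_perm_le _ (fun n => circleBox N (x n)) (Equiv.addRight (k : ZMod N))
      _ ≤ #{p ∈ Icc 1 N ×ˢ Icc 1 N | distToInt (x p.1 - x p.2) ≤ 1 / N} :=
          card_le_card (monotone_filter_right _ fun p _ => distToInt_sub_le_of_circleBox_eq hN)
      _ ≤ N + #(closePairs x N 1) := card_filter_distToInt_le x N 1
  have subset_biUnion :
      closePairs x N s ⊆ (Icc (-(⌈s⌉₊ + 1) : ℤ) (⌈s⌉₊ + 1)).biUnion shifted := fun p hp => by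
    obtain ⟨hp_mem, -, hp_dist⟩ := mem_filter.1 hp
    obtain ⟨k, hk, hp_box⟩ := exists_circleBox_eq_add hN hp_dist
    exact mem_biUnion.2 ⟨k, hk, mem_filter.2 ⟨hp_mem, hp_box⟩⟩
  calc #(closePairs x N s)
      ≤ #(Icc (-(⌈s⌉₊ + 1) : ℤ) (⌈s⌉₊ + 1)) * (N + #(closePairs x N 1)) :=
        (card_le_card subset_biUnion).trans
          (card_biUnion_le_card_mul _ _ _ fun k _ => card_shifted_le k)
    _ = (2 * ⌈s⌉₊ + 3) * (N + #(closePairs x N 1)) := by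
        rw [Int.card_Icc]
        congr 1
        lia

lemma HasPairCorrelation.div_le {x : ℕ → ℝ} {F : ℝ → ℝ} (hF : HasPairCorrelation x F) {s : ℝ}
    (hs : 1 ≤ s) : F s / (2 * s) ≤ 4 * (1 + F 1) := by
  have F_one_nonneg : 0 ≤ F 1 := ge_of_tendsto' (hF 1 one_pos) fun N => by positivity
  have F_le : F s ≤ (2 * ⌈s⌉₊ + 3) * (1 + F 1) := by
    refine le_of_tendsto_of_tendsto (hF s (by linarith))
      (((hF 1 one_pos).const_add 1).const_mul (2 * (⌈s⌉₊ : ℝ) + 3)) ?_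
    filter_upwards [eventually_gt_atTop 0] with N hN
    have card_le : (#(closePairs x N s) : ℝ) ≤ (2 * ⌈s⌉₊ + 3) * (N + #(closePairs x N 1)) := by
      exact_mod_cast card_closePairs_le x hN s
    grw [card_le]
    exact (by field_simp : _ = _).le
  have ceil_lt := Nat.ceil_lt_add_one (by linarith : 0 ≤ s)
  rw [div_le_iff₀ (by linarith)]
  nlinarith

end LinearGrowth

section LimsupOfAverages

lemma exists_forall_sum_le_add_sum {ι : Type*} {a b : ι → ℝ} (h : ∀ᶠ i in cofinite, a i ≤ b i) :
    ∃ D, ∀ s : Finset ι, ∑ i ∈ s, a i ≤ D + ∑ i ∈ s, b i := by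
  have summable_posPart : Summable fun i => (a i - b i)⁺ :=
    summable_of_hasFiniteSupport (h.mono fun i hi => by simpa using hi)
  refine ⟨∑' i, (a i - b i)⁺, fun s => ?_⟩
  grw [← summable_posPart.sum_le_tsum s fun i _ => posPart_nonneg _, ← sum_add_distrib]
  exact sum_le_sum fun i _ => sub_le_iff_le_add.1 (le_posPart _)

lemma le_of_forall_le_sum_div_sq {I L : ℝ} {a : ℕ → ℝ}
    (le_sum : ∀ S > 0, I ≤ (S + ∑ r ∈ Icc 1 S, a r) / S ^ 2)
    (ev_le : ∀ᶠ r : ℕ in atTop, a r ≤ 2 * L * r) : I ≤ L := by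
  obtain ⟨D, sum_le⟩ := exists_forall_sum_le_add_sum (Nat.cofinite_eq_atTop ▸ ev_le)
  have sum_linear (S : ℕ) : ∑ r ∈ Icc 1 S, 2 * L * r = L * (S * (S + 1)) := by
    induction S with
    | zero => simp
    | succ S ih => rw [sum_Icc_succ_top (by lia), ih]; push_cast; ring
  have tendsto_inv := tendsto_inv_atTop_nhds_zero_nat (𝕜 := ℝ)
  have tendsto_bound : Tendsto (fun S : ℕ => L + (1 + L) * (S : ℝ)⁻¹ + D * (S : ℝ)⁻¹ ^ 2) atTop
      (𝓝 L) := by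
    simpa using ((tendsto_inv.const_mul (1 + L)).const_add L).add ((tendsto_inv.pow 2).const_mul D)
  refine ge_of_tendsto tendsto_bound ?_
  filter_upwards [eventually_gt_atTop 0] with S hS
  grw [le_sum S hS, sum_le, sum_linear]
  exact (by field_simp; ring : _ = _).le

end LimsupOfAverages

section Energy

/-- The difference quotient at scale `h > 0` of the empirical distribution function
`t ↦ #{n ∈ [1, N] | x n ≤ t} / N`. -/
noncomputable def empiricalSlope (x : ℕ → ℝ) (N : ℕ) (h t : ℝ) : ℝ :=
  windowCount (Icc 1 N) x h t / (N * h)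

section Finite

variable (x : ℕ → ℝ) {N : ℕ}

lemma measurable_empiricalSlope (N : ℕ) (h : ℝ) : Measurable (empiricalSlope x N h) := by
  have measurable_count := (measurable_windowCount (Icc 1 N) x h).ennreal_toReal
  simp_rw [ENNReal.toReal_natCast] at measurable_count
  exact measurable_count.div_const (N * h)

lemma lintegral_enorm_empiricalSlope_sq (N : ℕ) (h : ℝ) :
    ∫⁻ t, ‖empiricalSlope x N h t‖ₑ ^ 2 =
      ENNReal.ofReal ((N * h) ^ 2)⁻¹ * ∫⁻ t, (windowCount (Icc 1 N) x h t : ℝ≥0∞) ^ 2 := by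
  rw [← lintegral_const_mul _ ((measurable_windowCount _ x h).pow_const 2)]
  congr with t
  rw [empiricalSlope, div_eq_inv_mul, enorm_mul, mul_pow, Real.enorm_natCast, ← enorm_pow,
    inv_pow, Real.enorm_of_nonneg (by positivity)]

lemma lintegral_enorm_empiricalSlope_natCast_mul_sq_le {h : ℝ} (hh : 0 ≤ h) {k : ℕ} (hk : 0 < k) :
    ∫⁻ t, ‖empiricalSlope x N (k * h) t‖ₑ ^ 2 ≤ ∫⁻ t, ‖empiricalSlope x N h t‖ₑ ^ 2 := by
  rw [lintegral_enorm_empiricalSlope_sq, lintegral_enorm_empiricalSlope_sq]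
  grw [lintegral_windowCount_natCast_mul_sq_le _ x hh, ← mul_assoc]
  gcongr
  rw [← ENNReal.ofReal_natCast, ← ENNReal.ofReal_pow (by positivity),
    ← ENNReal.ofReal_mul (by positivity)]
  gcongr
  exact (by field_simp : _ = _).le

lemma lintegral_enorm_empiricalSlope_div_sq_le (hN : 0 < N) (S : ℕ) :
    ∫⁻ t, ‖empiricalSlope x N (S / N) t‖ₑ ^ 2 ≤
      ENNReal.ofReal ((S + ∑ r ∈ Icc 1 S, (#(closePairs x N r) : ℝ) / N) / S ^ 2) := by
  have N_pos : (0 : ℝ) < N := by exact_mod_cast hN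
  rw [lintegral_enorm_empiricalSlope_sq, mul_div_cancel₀ _ N_pos.ne']
  grw [lintegral_windowCount_sq_le x hN]
  rw [← ENNReal.ofReal_mul (by positivity), inv_mul_eq_div]

end Finite

section Limit

variable {x : ℕ → ℝ} {U : Set ℝ} {G g F : ℝ → ℝ}

lemma tendsto_empiricalSlope
    (hdist : ∀ t ∈ U, Tendsto (fun N : ℕ => (#{n ∈ Icc 1 N | x n ≤ t} : ℝ) / N) atTop (𝓝 (G t)))
    {h t : ℝ} (hh : 0 ≤ h) (ht : t ∈ U) (hth : t + h ∈ U) :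
    Tendsto (fun N => empiricalSlope x N h t) atTop (𝓝 (h⁻¹ * (G (t + h) - G t))) := by
  refine (((hdist _ hth).sub (hdist _ ht)).const_mul h⁻¹).congr fun N => ?_
  rw [← sub_div, card_filter_le_eq_add_windowCount _ _ hh, Nat.cast_add, add_sub_cancel_left,
    empiricalSlope]
  ring

lemma liminf_lintegral_enorm_empiricalSlope_sq_le (hF : HasPairCorrelation x F) (S : ℕ) {j : ℕ}
    (hj : 0 < j) :
    liminf (fun k => ∫⁻ t, ‖empiricalSlope x (j * k) (S / j) t‖ₑ ^ 2) atTop ≤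
      ENNReal.ofReal ((S + ∑ r ∈ Icc 1 S, F r) / S ^ 2) := by
  have tendsto_sum : Tendsto (fun N : ℕ => ∑ r ∈ Icc 1 S, (#(closePairs x N r) : ℝ) / N) atTop
      (𝓝 (∑ r ∈ Icc 1 S, F r)) :=
    tendsto_finsetSum _ fun r hr => hF r (Nat.cast_pos.2 (mem_Icc.1 hr).1)
  have tendsto_count : Tendsto (fun N : ℕ => ENNReal.ofReal
      ((S + ∑ r ∈ Icc 1 S, (#(closePairs x N r) : ℝ) / N) / S ^ 2)) atTop
      (𝓝 (ENNReal.ofReal ((S + ∑ r ∈ Icc 1 S, F r) / S ^ 2))) :=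
    ENNReal.tendsto_ofReal ((tendsto_sum.const_add (S : ℝ)).div_const _)
  have tendsto_mul : Tendsto (fun k => j * k) atTop atTop := tendsto_id.const_mul_atTop' hj
  have le_count : ∀ᶠ k in atTop, ∫⁻ t, ‖empiricalSlope x (j * k) (S / j) t‖ₑ ^ 2 ≤ ENNReal.ofReal
      ((S + ∑ r ∈ Icc 1 S, (#(closePairs x (j * k) r) : ℝ) / (j * k : ℕ)) / S ^ 2) := by
    filter_upwards [eventually_gt_atTop 0] with k hk
    have scale_eq : (S / j : ℝ) = k * (S / (j * k : ℕ)) := by push_cast; field_simp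
    rw [scale_eq]
    exact (lintegral_enorm_empiricalSlope_natCast_mul_sq_le x (by positivity) hk).trans
      (lintegral_enorm_empiricalSlope_div_sq_le x (Nat.mul_pos hj hk) S)
  exact (liminf_le_liminf le_count).trans_eq (tendsto_count.comp tendsto_mul).liminf_eq

lemma tendsto_liminf_enorm_empiricalSlope_sq (hU : IsOpen U)
    (hdist : ∀ t ∈ U, Tendsto (fun N : ℕ => (#{n ∈ Icc 1 N | x n ≤ t} : ℝ) / N) atTop (𝓝 (G t)))
    {t g' : ℝ} (ht : t ∈ U) (hderiv : HasDerivAt G g' t) {S : ℕ} (hS : 0 < S) :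
    Tendsto (fun j : ℕ => liminf (fun k => ‖empiricalSlope x (j * k) (S / j) t‖ₑ ^ 2) atTop) atTop
      (𝓝 (‖g'‖ₑ ^ 2)) := by
  have tendsto_scale : Tendsto (fun j : ℕ => (S / j : ℝ)) atTop (𝓝[>] 0) :=
    tendsto_nhdsWithin_iff.2 ⟨tendsto_const_div_atTop_nhds_zero_nat _,
      (eventually_gt_atTop 0).mono fun j hj => Set.mem_Ioi.2 (by positivity)⟩
  have eventually_mem : ∀ᶠ j : ℕ in atTop, t + S / j ∈ U :=
    (tendsto_nhds_of_tendsto_nhdsWithin tendsto_scale).const_add t |>.eventually_mem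
      (hU.mem_nhds (by simpa using ht))
  have tendsto_slope : Tendsto (fun j : ℕ => ‖(S / j : ℝ)⁻¹ * (G (t + S / j) - G t)‖ₑ ^ 2) atTop
      (𝓝 (‖g'‖ₑ ^ 2)) :=
    ((ENNReal.continuous_pow 2).tendsto _).comp
      (hderiv.tendsto_slope_zero_right.comp tendsto_scale).enorm
  refine tendsto_slope.congr' ?_
  filter_upwards [eventually_gt_atTop 0, eventually_mem] with j hj htj
  have tendsto_mul : Tendsto (fun k => j * k) atTop atTop := tendsto_id.const_mul_atTop' hj
  have tendsto_fine := (tendsto_empiricalSlope hdist (by positivity) ht htj).comp tendsto_mul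
  exact (((ENNReal.continuous_pow 2).tendsto _).comp tendsto_fine.enorm).liminf_eq.symm

lemma HasPairCorrelation.setLIntegral_enorm_sq_le (hF : HasPairCorrelation x F) (hU : IsOpen U)
    (hdist : ∀ t ∈ U, Tendsto (fun N : ℕ => (#{n ∈ Icc 1 N | x n ≤ t} : ℝ) / N) atTop (𝓝 (G t)))
    (hderiv : ∀ᵐ t, t ∈ U → HasDerivAt G (g t) t) {S : ℕ} (hS : 0 < S) :
    ∫⁻ t in U, ‖g t‖ₑ ^ 2 ≤ ENNReal.ofReal ((S + ∑ r ∈ Icc 1 S, F r) / S ^ 2) := by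
  have measurable_sq (j k : ℕ) :
      Measurable fun t => ‖empiricalSlope x (j * k) (S / j) t‖ₑ ^ 2 :=
    (measurable_empiricalSlope x _ _).enorm.pow_const 2
  calc ∫⁻ t in U, ‖g t‖ₑ ^ 2
      = ∫⁻ t in U, liminf (fun j : ℕ =>
          liminf (fun k => ‖empiricalSlope x (j * k) (S / j) t‖ₑ ^ 2) atTop) atTop := by
        refine setLIntegral_congr_fun_ae hU.measurableSet ?_
        filter_upwards [hderiv] with t ht_deriv ht
        exact (tendsto_liminf_enorm_empiricalSlope_sq hU hdist ht (ht_deriv ht) hS).liminf_eq.symm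
    _ ≤ ∫⁻ t, liminf (fun j : ℕ =>
          liminf (fun k => ‖empiricalSlope x (j * k) (S / j) t‖ₑ ^ 2) atTop) atTop :=
        setLIntegral_le_lintegral _ _
    _ ≤ liminf (fun j : ℕ =>
          ∫⁻ t, liminf (fun k => ‖empiricalSlope x (j * k) (S / j) t‖ₑ ^ 2) atTop) atTop :=
        lintegral_liminf_le fun j => .liminf (measurable_sq j)
    _ ≤ ENNReal.ofReal ((S + ∑ r ∈ Icc 1 S, F r) / S ^ 2) := by
        refine liminf_le_of_frequently_le' ((eventually_gt_atTop 0).mono fun j hj => ?_).frequently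
        exact (lintegral_liminf_le (measurable_sq j)).trans
          (liminf_lintegral_enorm_empiricalSlope_sq_le hF S hj)

lemma HasPairCorrelation.setIntegral_sq_le (hF : HasPairCorrelation x F) (hU : IsOpen U)
    (hdist : ∀ t ∈ U, Tendsto (fun N : ℕ => (#{n ∈ Icc 1 N | x n ≤ t} : ℝ) / N) atTop (𝓝 (G t)))
    (hderiv : ∀ᵐ t, t ∈ U → HasDerivAt G (g t) t) {S : ℕ} (hS : 0 < S) :
    IntegrableOn (fun t => g t ^ 2) U ∧
      ∫ t in U, g t ^ 2 ≤ (S + ∑ r ∈ Icc 1 S, F r) / S ^ 2 := by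
  have energy_le := hF.setLIntegral_enorm_sq_le hU hdist hderiv hS
  simp_rw [← enorm_pow] at energy_le
  have deriv_ae_eq : deriv G =ᵐ[volume.restrict U] g :=
    (ae_restrict_iff' hU.measurableSet).2 (hderiv.mono fun t ht htU => (ht htU).deriv)
  have g_meas : AEStronglyMeasurable g (volume.restrict U) :=
    (measurable_deriv G).aestronglyMeasurable.congr deriv_ae_eq
  have F_nonneg : ∀ r ∈ Icc 1 S, 0 ≤ F r := fun r hr =>
    ge_of_tendsto' (hF r (Nat.cast_pos.2 (mem_Icc.1 hr).1)) fun N => by positivity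
  refine ⟨⟨g_meas.pow 2, energy_le.trans_lt ENNReal.ofReal_lt_top⟩, ?_⟩
  refine (ENNReal.ofReal_le_ofReal_iff
    (div_nonneg (add_nonneg S.cast_nonneg (sum_nonneg F_nonneg)) (by positivity))).1 ?_
  exact (Real.ofReal_le_enorm _).trans ((enorm_integral_le_lintegral_enorm _).trans energy_le)

end Limit

end Energy

lemma ae_hasDerivAt_integral_Ioo {g : ℝ → ℝ} {a b : ℝ} (hab : a ≤ b)
    (hg : IntegrableOn g (Set.Icc a b)) :
    ∀ᵐ t, t ∈ Set.Ioo a b → HasDerivAt (fun t => ∫ u in a..t, g u) (g t) t := by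
  have hg' : IntervalIntegrable g volume a b :=
    (intervalIntegrable_iff_integrableOn_Icc_of_le hab).2 hg
  filter_upwards [hg'.ae_hasDerivAt_integral] with t ht_deriv ht
  rw [Set.uIcc_of_le hab] at ht_deriv
  exact ht_deriv (Set.Ioo_subset_Icc_self ht) a (Set.left_mem_Icc.2 hab)

theorem stmt_13_general {x : ℕ → ℝ} {F : ℝ → ℝ} (hF : HasPairCorrelation x F) {U : Set ℝ}
    (hU : IsOpen U) {G g : ℝ → ℝ}
    (hdist : ∀ t ∈ U, Tendsto (fun N : ℕ => (#{n ∈ Icc 1 N | x n ≤ t} : ℝ) / N) atTop (𝓝 (G t)))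
    (hderiv : ∀ᵐ t, t ∈ U → HasDerivAt G (g t) t) :
    IntegrableOn (fun t => g t ^ 2) U ∧
      ∫ t in U, g t ^ 2 ≤ limsup (fun s : ℝ => F s / (2 * s)) atTop := by
  have integral_le {S : ℕ} (hS : 0 < S) := hF.setIntegral_sq_le hU hdist hderiv hS
  refine ⟨(integral_le one_pos).1, ?_⟩
  have bounded : IsBoundedUnder (· ≤ ·) atTop (fun s : ℝ => F s / (2 * s)) :=
    isBoundedUnder_of_eventually_le ((eventually_ge_atTop 1).mono fun s => hF.div_le)
  refine le_limsup_of_le bounded fun L ev_le => ?_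
  refine le_of_forall_le_sum_div_sq (a := fun r => F r) (fun S hS => (integral_le hS).2) ?_
  filter_upwards [tendsto_natCast_atTop_atTop.eventually ev_le, eventually_gt_atTop 0] with r hr hr0
  rw [div_le_iff₀ (by positivity)] at hr
  linarith

theorem stmt_13 (x : ℕ → ℝ) (hx : ∀ n, x n ∈ Set.Ico (0 : ℝ) 1)
    (g : ℝ → ℝ) (hg0 : ∀ t ∈ Set.Icc (0 : ℝ) 1, 0 ≤ g t)
    (hgInt : IntegrableOn g (Set.Icc (0 : ℝ) 1))
    (C : ℝ) (hgbd : ∀ t ∈ Set.Icc (0 : ℝ) 1, g t ≤ C)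
    (hdist : ∀ t ∈ Set.Icc (0 : ℝ) 1,
      Tendsto (fun N : ℕ =>
        (((Finset.Icc 1 N).filter (fun n => x n ≤ t)).card : ℝ) / N)
        atTop (nhds (∫ u in (0:ℝ)..t, g u)))
    (F : ℝ → ℝ)
    (hF : ∀ s : ℝ, 0 < s →
      Tendsto (fun N : ℕ =>
        (((Finset.Icc 1 N ×ˢ Finset.Icc 1 N).filter (fun p : ℕ × ℕ =>
          p.1 ≠ p.2 ∧ distToInt (x p.1 - x p.2) ≤ s / N)).card : ℝ) / N)
        atTop (nhds (F s))) :
    (∫ u in (0:ℝ)..1, g u ^ 2) ≤ Filter.limsup (fun s : ℝ => F s / (2 * s)) atTop := by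
  rw [intervalIntegral.integral_of_le zero_le_one, integral_Ioc_eq_integral_Ioo]
  exact (stmt_13_general hF isOpen_Ioo (fun t ht => hdist t (Set.Ioo_subset_Icc_self ht))
    (ae_hasDerivAt_integral_Ioo zero_le_one hgInt)).2
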